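/- Let φ(z) = z, so that p_{N,R}^φ is the classical Fourier integral density estimator. Suppose the true density p ∈ L¹(ℝ^D) ∩ L²(ℝ^D) is ordinary smooth of order β > 1, i.e. its Fourier transform satisfies |p̂(x)| ≤ c ∏_{j=1}^D 1/(1 + |x_j|^β) almost everywhere for some constant c > 0. Then there exists a universal constant c̄ such that for all R > 0 and all N ≥ 1, MISE(p_{N,R}^φ, p) ≤ c̄ ( R^{−β+1} + R^D / N ). -/

import Mathlib

/-!
The bound is the bias-variance decomposition of the mean squared error, integrated over space.

For `φ(z) = z` the estimator is the empirical mean of `K (k - kᵢ)`, where `K = dirichletKernel D R`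
is the product of the one-dimensional kernels `(R / π) sinc (R u)`. Tonelli's theorem exchanges the
expectation with the integral over `k`, and at each point `k` the mean squared error is the squared
bias plus a variance that is at most `N⁻¹ 𝔼 K (k - X)²` (`pointwise_mse`). Integrating in `k`, the
variance contributes at most `‖K‖₂² / N ≤ R ^ D / N`, by the elementary bound
`sinc x ^ 2 ≤ 2 / (1 + x ^ 2)` (`mise_lintegral_bound`).

The expected value of the estimator is `K * p`, and by Fubini this is the inverse Fourier transform
of `𝓕 p` cut off to the cube `|ξ_j| ≤ R / 2π` (`fourierInv_cube_eq`). By Plancherel's theorem the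
integrated squared bias therefore equals the integral of `‖𝓕 p‖²` outside that cube
(`lintegral_truncation_error`, `bias_eq`). A frequency outside the cube has some coordinate with
`|2π ξ_j| > R`; summing over that coordinate, using the decay hypothesis with one factor
`|2π ξ_j| ^ (-β)` and the remaining factors integrable, gives a constant times `R ^ (-β + 1)`
(`tail_integral_bound`).

The `L²` Fourier transform is available as an abstract isometry, so Plancherel's theorem for the
Fourier integral needs the fact that the two transforms agree almost everywhere on `L¹ ∩ L²`; this
is checked by testing against smooth compactly supported functions (`L2_fourier_ae_eq`).
-/

open MeasureTheory Real Finset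

/-- `sin z / z`, with the convention that its value at `z = 0` is `1`. -/
noncomputable def sincLike (z : ℝ) : ℝ := if z = 0 then 1 else Real.sin z / z

/-- The generalized Fourier density estimator, with `A` passed explicitly. -/
noncomputable def pEst (D N : ℕ) (φ : ℝ → ℝ) (A R : ℝ)
    (ks : Fin N → Fin D → ℝ) (k : Fin D → ℝ) : ℝ :=
  R ^ D / (N * A ^ D) *
    ∑ i : Fin N, ∏ j : Fin D, φ (sincLike (R * (k j - ks i j)))

/-- The law of an i.i.d. sample of size `N` from the distribution on `ℝ^D` with density `p`. -/
noncomputable def sampleMeasure (D N : ℕ) (p : (Fin D → ℝ) → ℝ) :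
    Measure (Fin N → Fin D → ℝ) :=
  Measure.pi fun _ : Fin N => volume.withDensity fun x => ENNReal.ofReal (p x)

/-- The mean integrated squared error of the generalized Fourier density estimator. -/
noncomputable def MISE (D N : ℕ) (φ : ℝ → ℝ) (A R : ℝ) (p : (Fin D → ℝ) → ℝ) : ℝ :=
  ∫ ks : Fin N → Fin D → ℝ,
    (∫ k : Fin D → ℝ, (pEst D N φ A R ks k - p k) ^ 2) ∂(sampleMeasure D N p)

/-- The Fourier transform `p̂(t) = ∫ e^{i t·x} p(x) dx` of the density `p` on `ℝ^D`. -/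
noncomputable def charFun (D : ℕ) (p : (Fin D → ℝ) → ℝ) (t : Fin D → ℝ) : ℂ :=
  ∫ x : Fin D → ℝ, Complex.exp (Complex.I * ((∑ j : Fin D, t j * x j : ℝ) : ℂ)) * (p x : ℂ)

open scoped FourierTransform SchwartzMap ContDiff

/-! ### Plancherel's theorem for the Fourier integral -/

section
variable {E : Type*} [NormedAddCommGroup E] [InnerProductSpace ℝ E] [FiniteDimensional ℝ E]
  [MeasurableSpace E] [BorelSpace E]

lemma continuous_fourier_of_integrable {f : E → ℂ} (hf : Integrable f) : Continuous (𝓕 f) :=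
  VectorFourier.fourierIntegral_continuous Real.continuous_fourierChar
      (by exact continuous_inner) hf

lemma continuous_fourierInv_of_integrable {f : E → ℂ} (hf : Integrable f) : Continuous (𝓕⁻ f) :=
  VectorFourier.fourierIntegral_continuous (L := -innerₗ E) Real.continuous_fourierChar
      (by exact continuous_inner.neg) hf

/-- On `L¹ ∩ L²` the `L²` Fourier transform is given by the Fourier integral: both sides have the
same pairing with every test function, since each transform is self-dual under the pairing. -/
lemma L2_fourier_ae_eq {f : E → ℂ} (hf1 : Integrable f) (hf2 : MemLp f 2) :
    (𝓕 (hf2.toLp f) : Lp (α := E) ℂ 2) =ᵐ[volume] 𝓕 f := by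
  have h0 := Lp.fourier_toTemperedDistribution_eq (hf2.toLp f)
  set F : Lp ℂ 2 (volume : Measure E) := 𝓕 (hf2.toLp f) with hF
  apply ae_eq_of_integral_contDiff_smul_eq
  · exact (Lp.memLp _).locallyIntegrable (by norm_num)
  · exact (continuous_fourier_of_integrable hf1).locallyIntegrable
  intro g g_smooth g_cpt
  have hg₁ : HasCompactSupport (Complex.ofRealCLM ∘ g) := g_cpt.comp_left rfl
  have hg₂ : ContDiff ℝ ∞ (Complex.ofRealCLM ∘ g) := by fun_prop
  set G := hg₁.toSchwartzMap hg₂ with hG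
  have h1 := congrArg (fun T => T G) h0
  simp only [TemperedDistribution.fourier_apply, Lp.toTemperedDistribution_apply] at h1
  have h2 : ∀ x, G x = (g x : ℂ) := fun x => rfl
  calc ∫ x, g x • F x
      = ∫ x, G x • F x := by
        simp [h2]
    _ = ∫ x, (𝓕 G) x • (hf2.toLp f) x := h1.symm
    _ = ∫ x, (𝓕 G) x • f x := by
        apply integral_congr_ae
        filter_upwards [hf2.coeFn_toLp] with x hx
        rw [hx]
    _ = ∫ x, G x • 𝓕 f x := by
        have := VectorFourier.integral_fourierIntegral_smul_eq_flip (L := innerₗ E)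
          (μ := volume) (ν := volume) (f := (G : E → ℂ)) (g := f)
          Real.continuous_fourierChar (by exact continuous_inner) G.integrable hf1
        simpa [SchwartzMap.fourier_coe] using! this
    _ = _ := by simp [h2]

/-- The analogue of `L2_fourier_ae_eq` for the inverse transform. -/
lemma L2_fourierInv_ae_eq {f : E → ℂ} (hf1 : Integrable f) (hf2 : MemLp f 2) :
    (𝓕⁻ (hf2.toLp f) : Lp (α := E) ℂ 2) =ᵐ[volume] 𝓕⁻ f := by
  have h0 := Lp.fourierInv_toTemperedDistribution_eq (hf2.toLp f)
  set F : Lp ℂ 2 (volume : Measure E) := 𝓕⁻ (hf2.toLp f) with hF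
  apply ae_eq_of_integral_contDiff_smul_eq
  · exact (Lp.memLp _).locallyIntegrable (by norm_num)
  · exact (continuous_fourierInv_of_integrable hf1).locallyIntegrable
  intro g g_smooth g_cpt
  have hg₁ : HasCompactSupport (Complex.ofRealCLM ∘ g) := g_cpt.comp_left rfl
  have hg₂ : ContDiff ℝ ∞ (Complex.ofRealCLM ∘ g) := by fun_prop
  set G := hg₁.toSchwartzMap hg₂ with hG
  have h1 := congrArg (fun T => T G) h0
  simp only [TemperedDistribution.fourierInv_apply, Lp.toTemperedDistribution_apply] at h1
  have h2 : ∀ x, G x = (g x : ℂ) := fun x => rfl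
  calc ∫ x, g x • F x
      = ∫ x, G x • F x := by
        simp [h2]
    _ = ∫ x, (𝓕⁻ G) x • (hf2.toLp f) x := h1.symm
    _ = ∫ x, (𝓕⁻ G) x • f x := by
        apply integral_congr_ae
        filter_upwards [hf2.coeFn_toLp] with x hx
        rw [hx]
    _ = ∫ x, G x • 𝓕⁻ f x := by
        have := VectorFourier.integral_fourierIntegral_smul_eq_flip (L := -innerₗ E)
          (μ := volume) (ν := volume) (f := (G : E → ℂ)) (g := f)
          Real.continuous_fourierChar (by exact continuous_inner.neg) G.integrable hf1
        have hfl : (-innerₗ E).flip = -innerₗ E := by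
          ext x y; simp [real_inner_comm]
        rw [hfl] at this
        simpa [SchwartzMap.fourierInv_coe] using! this
    _ = _ := by simp [h2]

/-- Plancherel's theorem for a spectral cut-off: the squared `L²` distance from `f` to the function
with spectrum restricted to `s` is the spectral energy of `f` outside `s`. -/
lemma lintegral_truncation_error {f : E → ℂ} (hf1 : Integrable f) (hf2 : MemLp f 2)
    {s : Set E} (hs : MeasurableSet s) (hg1 : Integrable (s.indicator (𝓕 f))) :
    ∫⁻ x, ‖𝓕⁻ (s.indicator (𝓕 f)) x - f x‖ₑ ^ 2 = ∫⁻ ξ in sᶜ, ‖𝓕 f ξ‖ₑ ^ 2 := by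
  have hF := L2_fourier_ae_eq hf1 hf2
  have hF2 : MemLp (𝓕 f) 2 := (memLp_congr_ae hF).1 (Lp.memLp _)
  have hg2 : MemLp (s.indicator (𝓕 f)) 2 := hF2.indicator hs
  have hI := L2_fourierInv_ae_eq hg1 hg2
  have key : ‖(𝓕⁻ (hg2.toLp _) : Lp ℂ 2 (volume : Measure E)) - hf2.toLp f‖ₑ
      = ‖hg2.toLp _ - (𝓕 (hf2.toLp f) : Lp ℂ 2 (volume : Measure E))‖ₑ := by
    have := (Lp.fourierTransformₗᵢ E ℂ).enorm_map
      ((𝓕⁻ (hg2.toLp _) : Lp ℂ 2 (volume : Measure E)) - hf2.toLp f)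
    rw [map_sub] at this
    rw [← this]
    congr 2
    exact (Lp.fourierTransformₗᵢ E ℂ).apply_symm_apply _
  rw [Lp.enorm_def, Lp.enorm_def] at key
  have e1 : eLpNorm (𝓕⁻ (s.indicator (𝓕 f)) - f) 2 = eLpNorm (sᶜ.indicator (𝓕 f)) 2 := by
    have a1 : 𝓕⁻ (s.indicator (𝓕 f)) - f =ᵐ[volume]
      ((𝓕⁻ (hg2.toLp _) : Lp ℂ 2 (volume : Measure E)) - hf2.toLp f : Lp ℂ 2 (volume : Measure E)) := by
      filter_upwards [hI, hf2.coeFn_toLp, Lp.coeFn_sub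
        (𝓕⁻ (hg2.toLp _) : Lp ℂ 2 (volume : Measure E)) (hf2.toLp f)] with x h1 h2 h3
      rw [h3, Pi.sub_apply, Pi.sub_apply, h1, h2]
    have a2 : -(sᶜ.indicator (𝓕 f)) =ᵐ[volume]
      (hg2.toLp _ - (𝓕 (hf2.toLp f) : Lp ℂ 2 (volume : Measure E)) : Lp ℂ 2 (volume : Measure E)) := by
      filter_upwards [hF, hg2.coeFn_toLp, Lp.coeFn_sub
        (hg2.toLp _) (𝓕 (hf2.toLp f) : Lp ℂ 2 (volume : Measure E))] with x h1 h2 h3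
      rw [h3, Pi.sub_apply, h1, h2]
      by_cases hx : x ∈ s <;> simp [hx]
    rw [eLpNorm_congr_ae a1, key, ← eLpNorm_congr_ae a2, eLpNorm_neg]
  rw [← lintegral_indicator hs.compl]
  have e2 := congrArg (fun z => z ^ (2:ℝ)) e1
  simp only [eLpNorm_eq_lintegral_rpow_enorm_toReal (p := 2) (by norm_num) (by norm_num)] at e2
  simp only [ENNReal.toReal_ofNat, ← ENNReal.rpow_mul] at e2
  norm_num at e2
  rw [e2]
  congr 1
  ext x
  by_cases hx : x ∈ s <;> simp [hx]
end

/-! ### The kernel and the spectral cube -/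

/-- The kernel of the Fourier integral estimator, normalized: the product over the coordinates of
`(R / π) sinc (R u_j) = sin (R u_j) / (π u_j)`. -/
noncomputable def dirichletKernel (D : ℕ) (R : ℝ) (u : Fin D → ℝ) : ℝ :=
  ∏ j, (R / π * sinc (R * u j))

lemma integral_Icc_exp {R : ℝ} (hR : 0 < R) (u : ℝ) :
    ∫ t : ℝ, (Set.Icc (-(R / (2 * π))) (R / (2 * π))).indicator
      (fun t : ℝ => Complex.exp (((2 * π * t * u : ℝ) : ℂ) * Complex.I)) t
      = ((R / π * sinc (R * u) : ℝ) : ℂ) := by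
  have hr : -(R / (2 * π)) ≤ R / (2 * π) := by
    have : 0 < R / (2 * π) := by positivity
    linarith
  rw [integral_indicator measurableSet_Icc, integral_Icc_eq_integral_Ioc,
    ← intervalIntegral.integral_of_le hr]
  by_cases hu : u = 0
  · subst hu
    simp
    field
  · have hc : 2 * π * u ≠ 0 := by positivity
    have := intervalIntegral.integral_comp_mul_right (a := -(R / (2 * π))) (b := R / (2 * π))
      (fun t : ℝ => Complex.exp ((t : ℂ) * Complex.I)) hc
    have h1 : R / (2 * π) * (2 * π * u) = R * u := by field
    rw [neg_mul, h1, integral_exp_mul_I_eq_sinc] at this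
    have h2 : ∀ t : ℝ, 2 * π * t * u = t * (2 * π * u) := fun t => by ring
    simp only [h2]
    rw [this]
    rw [Complex.real_smul]
    push_cast
    have : (π : ℂ) ≠ 0 := by exact_mod_cast pi_ne_zero
    have : (u : ℂ) ≠ 0 := by exact_mod_cast hu
    field

/-- The cube of frequencies `|ξ_j| ≤ R / 2π`, in the normalization `e^{-2πi x·ξ}` of `𝓕`; it
corresponds to angular frequencies at most `R`. -/
def cube (D : ℕ) (R : ℝ) : Set (EuclideanSpace ℝ (Fin D)) :=
  {ξ | ∀ j, ξ j ∈ Set.Icc (-(R / (2 * π))) (R / (2 * π))}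

lemma measurableSet_cube (D : ℕ) (R : ℝ) : MeasurableSet (cube D R) := by
  have : cube D R = ⋂ j, (fun ξ : EuclideanSpace ℝ (Fin D) => ξ j) ⁻¹'
      Set.Icc (-(R / (2 * π))) (R / (2 * π)) := by
    ext; simp [cube]
  rw [this]
  exact MeasurableSet.iInter fun j => measurableSet_Icc.preimage (by fun_prop)

lemma volume_cube_lt_top (D : ℕ) (R : ℝ) : volume (cube D R) < ⊤ := by
  have h : cube D R = WithLp.ofLp ⁻¹' (Set.pi Set.univ fun _ : Fin D =>
      Set.Icc (-(R / (2 * π))) (R / (2 * π))) := by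
    ext; simp only [cube, Set.mem_ofPred_eq, Set.mem_preimage, Set.mem_univ_pi]
  rw [h, (PiLp.volume_preserving_ofLp (Fin D)).measure_preimage
    (MeasurableSet.univ_pi fun _ => measurableSet_Icc).nullMeasurableSet, volume_pi_pi]
  exact ENNReal.prod_lt_top fun i _ => by simp

/-- The Fourier transform of the modulated cube indicator is the product sinc kernel. -/
lemma fourier_cube {D : ℕ} {R : ℝ} (hR : 0 < R) (k x : EuclideanSpace ℝ (Fin D)) :
    𝓕 ((cube D R).indicator fun ξ => ((𝐞 (inner ℝ ξ k) : Circle) : ℂ)) x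
      = (dirichletKernel D R (fun j => k j - x j) : ℂ) := by
  rw [Real.fourier_eq]
  have h : ∀ ξ : EuclideanSpace ℝ (Fin D), 𝐞 (-(inner ℝ ξ x)) •
      (cube D R).indicator (fun ξ => ((𝐞 (inner ℝ ξ k) : Circle) : ℂ)) ξ
      = ∏ j, (Set.Icc (-(R / (2 * π))) (R / (2 * π))).indicator
      (fun t : ℝ => Complex.exp (((2 * π * t * (k j - x j) : ℝ) : ℂ) * Complex.I)) (ξ j) := by
    intro ξ
    by_cases hξ : ξ ∈ cube D R
    · have : ∀ j, ξ j ∈ Set.Icc (-(R / (2 * π))) (R / (2 * π)) := hξ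
      rw [Set.indicator_of_mem hξ, Finset.prod_congr rfl fun j _ => Set.indicator_of_mem (this j) _,
        ← Complex.exp_sum, Circle.smul_def, smul_eq_mul, Real.fourierChar_apply,
        Real.fourierChar_apply, ← Complex.exp_add]
      congr 1
      rw [← Finset.sum_mul, ← add_mul]
      congr 1
      norm_cast
      simp only [PiLp.inner_apply, RCLike.inner_apply, conj_trivial, Finset.mul_sum,
        ← Finset.sum_neg_distrib, ← Finset.sum_add_distrib]
      exact Finset.sum_congr rfl fun j _ => by ring
    · have : ∃ j, ξ j ∉ Set.Icc (-(R / (2 * π))) (R / (2 * π)) := by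
        simpa [cube] using hξ
      obtain ⟨j, hj⟩ := this
      rw [Set.indicator_of_notMem hξ, smul_zero]
      exact (Finset.prod_eq_zero (Finset.mem_univ j) (Set.indicator_of_notMem hj _)).symm
  simp only [h]
  rw [← (PiLp.volume_preserving_toLp (Fin D)).integral_comp
    (MeasurableEquiv.toLp 2 (Fin D → ℝ)).measurableEmbedding]
  have := integral_fintype_prod_volume_eq_prod (ι := Fin D) (fun j => (Set.Icc (-(R / (2 * π))) (R / (2 * π))).indicator
      (fun t : ℝ => Complex.exp (((2 * π * t * (k j - x j) : ℝ) : ℂ) * Complex.I)))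
  refine this.trans ?_
  simp only [integral_Icc_exp hR, dirichletKernel]
  push_cast
  rfl

/-- Cutting off the spectrum of `f` to the cube amounts to convolving `f` with the kernel. It is the
self-duality of `𝓕` applied to `f` and the modulated indicator of `fourier_cube`. -/
lemma fourierInv_cube_eq {D : ℕ} {R : ℝ} (hR : 0 < R) {f : EuclideanSpace ℝ (Fin D) → ℂ}
    (hf : Integrable f) (k : EuclideanSpace ℝ (Fin D)) :
    𝓕⁻ ((cube D R).indicator (𝓕 f)) k
      = ∫ x, (dirichletKernel D R (fun j => k j - x j) : ℂ) * f x := by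
  have h_integrable : Integrable ((cube D R).indicator
      fun ξ : EuclideanSpace ℝ (Fin D) => ((𝐞 (inner ℝ ξ k) : Circle) : ℂ)) := by
    rw [integrable_indicator_iff (measurableSet_cube D R)]
    refine Measure.integrableOn_of_bounded (M := 1) (volume_cube_lt_top D R).ne ?_ ?_
    · have : Continuous fun ξ : EuclideanSpace ℝ (Fin D) => ((𝐞 (inner ℝ ξ k) : Circle) : ℂ) := by
        fun_prop
      exact this.aestronglyMeasurable
    · exact Filter.Eventually.of_forall fun ξ => (Circle.norm_coe _).le
  have := VectorFourier.integral_fourierIntegral_smul_eq_flip (L := innerₗ (EuclideanSpace ℝ (Fin D)))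
          (μ := volume) (ν := volume) (f := ((cube D R).indicator
      fun ξ : EuclideanSpace ℝ (Fin D) => ((𝐞 (inner ℝ ξ k) : Circle) : ℂ))) (g := f)
          Real.continuous_fourierChar (by exact continuous_inner) h_integrable hf
  have h2 : ∫ x, (𝓕 ((cube D R).indicator fun ξ : EuclideanSpace ℝ (Fin D) =>
        ((𝐞 (inner ℝ ξ k) : Circle) : ℂ))) x • f x
      = ∫ ξ, ((cube D R).indicator fun ξ : EuclideanSpace ℝ (Fin D) =>
        ((𝐞 (inner ℝ ξ k) : Circle) : ℂ)) ξ • 𝓕 f ξ := by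
    simpa using! this
  simp only [fourier_cube hR] at h2
  simp only [smul_eq_mul] at h2
  rw [h2, Real.fourierInv_eq]
  congr 1
  ext ξ
  by_cases hξ : ξ ∈ cube D R <;> simp [hξ, Circle.smul_def]

/-! ### The integrated squared bias -/

/-- The density as a complex-valued function on `EuclideanSpace ℝ (Fin D)`, the type on which the
Fourier transform is defined. -/
noncomputable def liftC {D : ℕ} (p : (Fin D → ℝ) → ℝ) (x : EuclideanSpace ℝ (Fin D)) : ℂ :=
  (p x.ofLp : ℂ)

lemma integrable_liftC {D : ℕ} {p : (Fin D → ℝ) → ℝ} (hp : Integrable p) :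
    Integrable (liftC p) :=
  ((PiLp.volume_preserving_ofLp (Fin D)).integrable_comp_of_integrable hp).ofReal

lemma memLp_liftC {D : ℕ} {p : (Fin D → ℝ) → ℝ} (hp_meas : Measurable p)
    (hp : Integrable (fun x => p x ^ 2)) : MemLp (liftC p) 2 := by
  have h : MemLp p 2 := (memLp_two_iff_integrable_sq hp_meas.aestronglyMeasurable).2 hp
  exact (h.comp_measurePreserving (PiLp.volume_preserving_ofLp (Fin D))).ofReal

/-- Comparison of the normalization `e^{-2πi x·ξ}` of `𝓕` with `e^{i t·x}`, that of `charFun`. -/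
lemma fourier_liftC {D : ℕ} (p : (Fin D → ℝ) → ℝ) (ξ : EuclideanSpace ℝ (Fin D)) :
    𝓕 (liftC p) ξ = charFun D p (fun j => -(2 * π) * ξ j) := by
  rw [Real.fourier_eq, _root_.charFun, ← (PiLp.volume_preserving_toLp (Fin D)).integral_comp
    (MeasurableEquiv.toLp 2 (Fin D → ℝ)).measurableEmbedding]
  congr 1
  ext x
  rw [Circle.smul_def, Real.fourierChar_apply, smul_eq_mul, liftC, mul_comm Complex.I]
  congr 3
  norm_cast
  simp only [PiLp.inner_apply, RCLike.inner_apply, conj_trivial, Finset.mul_sum, mul_neg,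
    ← Finset.sum_neg_distrib]
  exact Finset.sum_congr rfl fun j _ => by ring

/-- Ordinary smoothness in terms of `𝓕`. The exceptional null set is dilated by `-(2π)⁻¹`. -/
lemma ae_fourier_bound {D : ℕ} {p : (Fin D → ℝ) → ℝ} {β c : ℝ}
    (hordinary : ∀ᵐ x : Fin D → ℝ,
      ‖charFun D p x‖ ≤ c * ∏ j : Fin D, 1 / (1 + |x j| ^ β)) :
    ∀ᵐ ξ : Fin D → ℝ, ‖𝓕 (liftC p) (WithLp.toLp 2 ξ)‖ ≤
      c * ∏ j : Fin D, 1 / (1 + |2 * π * ξ j| ^ β) := by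
  have hne : -(2 * π) ≠ 0 := by have := pi_pos; linarith
  have h : ∀ᵐ ξ : Fin D → ℝ, ‖charFun D p ((-(2 * π)) • ξ)‖ ≤
      c * ∏ j : Fin D, 1 / (1 + |((-(2 * π)) • ξ) j| ^ β) := by
    rw [ae_iff] at hordinary ⊢
    have := Measure.addHaar_preimage_smul (volume : Measure (Fin D → ℝ)) hne
      {x : Fin D → ℝ | ¬ ‖charFun D p x‖ ≤ c * ∏ j : Fin D, 1 / (1 + |x j| ^ β)}
    rw [hordinary, mul_zero] at this
    exact this
  filter_upwards [h] with ξ hξ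
  rw [fourier_liftC]
  have e : ∀ j, |((-(2 * π)) • ξ) j| = |2 * π * ξ j| := by
    intro j; rw [Pi.smul_apply, smul_eq_mul, neg_mul, abs_neg]
  simpa only [e] using! hξ

/-- The integrated squared bias is the spectral energy of `p` outside the cube. -/
lemma bias_eq {D : ℕ} {R : ℝ} (hR : 0 < R) {p : (Fin D → ℝ) → ℝ} (hp_meas : Measurable p)
    (hp_int : Integrable p) (hp_sq : Integrable (fun x => p x ^ 2)) :
    ∫⁻ k : Fin D → ℝ, ENNReal.ofReal (((∫ x, dirichletKernel D R (k - x) * p x) - p k) ^ 2)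
      = ∫⁻ ξ : Fin D → ℝ, (WithLp.toLp 2 ⁻¹' (cube D R)ᶜ).indicator
        (fun ξ => ‖𝓕 (liftC p) (WithLp.toLp 2 ξ)‖ₑ ^ 2) ξ := by
  have hI := integrable_liftC hp_int
  have hg1 : Integrable ((cube D R).indicator (𝓕 (liftC p))) := by
    rw [integrable_indicator_iff (measurableSet_cube D R)]
    refine Measure.integrableOn_of_bounded (M := ∫ x, ‖liftC p x‖) (volume_cube_lt_top D R).ne
      (continuous_fourier_of_integrable hI).aestronglyMeasurable ?_
    exact Filter.Eventually.of_forall fun ξ =>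
      VectorFourier.norm_fourierIntegral_le_integral_norm _ _ _ _ _
  have h := lintegral_truncation_error hI (memLp_liftC hp_meas hp_sq)
    (measurableSet_cube D R) hg1
  rw [← lintegral_indicator (measurableSet_cube D R).compl,
    ← (PiLp.volume_preserving_toLp (Fin D)).lintegral_comp_emb
    (MeasurableEquiv.toLp 2 (Fin D → ℝ)).measurableEmbedding,
    ← (PiLp.volume_preserving_toLp (Fin D)).lintegral_comp_emb
    (MeasurableEquiv.toLp 2 (Fin D → ℝ)).measurableEmbedding] at h
  refine Eq.trans ?_ h
  congr 1
  ext k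
  rw [fourierInv_cube_eq hR hI, ← (PiLp.volume_preserving_toLp (Fin D)).integral_comp
    (MeasurableEquiv.toLp 2 (Fin D → ℝ)).measurableEmbedding]
  have e : (∫ x : Fin D → ℝ, (dirichletKernel D R (fun j => (WithLp.toLp 2 k : EuclideanSpace ℝ (Fin D)) j
        - (WithLp.toLp 2 x : EuclideanSpace ℝ (Fin D)) j) : ℂ)
        * liftC p (WithLp.toLp 2 x)) - liftC p (WithLp.toLp 2 k)
      = (((∫ x, dirichletKernel D R (k - x) * p x) - p k : ℝ) : ℂ) := by
    push_cast
    rw [← integral_complex_ofReal]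
    simp only [liftC, Complex.ofReal_mul]
    rfl
  rw [e, ← enorm_pow, ← ofReal_norm]
  congr 1
  rw [norm_pow, Complex.norm_real, Real.norm_eq_abs, sq_abs]

/-! ### Spectral energy outside the cube -/

lemma integrable_decay {β : ℝ} (hβ : 1 < β) :
    Integrable fun u : ℝ => 1 / (1 + |2 * π * u| ^ β) := by
  have h : Integrable fun v : ℝ => 1 / (1 + |v| ^ β) := by
    refine ((integrable_one_add_norm (E := ℝ) (μ := volume) (r := β) (by simpa using hβ)).const_mul
      (2 ^ β)).mono' (by
        have : Continuous fun v : ℝ => |v| ^ β :=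
          continuous_abs.rpow_const fun _ => Or.inr (by linarith)
        exact (measurable_const.div (measurable_const.add this.measurable)).aestronglyMeasurable) ?_
    refine Filter.Eventually.of_forall fun v => ?_
    have hv := abs_nonneg v
    have h0 : 0 ≤ |v| ^ β := rpow_nonneg hv _
    rw [Real.norm_eq_abs, abs_of_nonneg (by positivity), Real.norm_eq_abs, rpow_neg (by positivity),
      ← div_eq_mul_inv, div_le_div_iff₀ (by positivity) (by positivity), one_mul]
    have hb : 0 ≤ β := by linarith
    rcases le_total |v| 1 with h | h
    · calc (1 + |v|) ^ β ≤ 2 ^ β := rpow_le_rpow (by positivity) (by linarith) hb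
        _ ≤ _ := le_mul_of_one_le_right (by positivity) (by linarith)
    · calc (1 + |v|) ^ β ≤ (2 * |v|) ^ β := rpow_le_rpow (by positivity) (by linarith) hb
        _ = 2 ^ β * |v| ^ β := mul_rpow (by norm_num) hv
        _ ≤ _ := by gcongr; linarith
  exact h.comp_mul_left' (by positivity)

/-- The function `|v| ^ (-β)` for `|v| > R` and `0` otherwise, at the angular frequency
`v = 2 π u`. -/
noncomputable def tail (β R u : ℝ) : ℝ :=
  (Set.Ioi R).indicator (fun t => t ^ (-β)) |2 * π * u|

lemma tail_nonneg {β R : ℝ} (u : ℝ) : 0 ≤ tail β R u :=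
  Set.indicator_apply_nonneg fun _ => rpow_nonneg (abs_nonneg _) _

lemma integral_tail {β R : ℝ} (hβ : 1 < β) (hR : 0 < R) :
    Integrable (tail β R) ∧ ∫ u, tail β R u ≤ R ^ (-β + 1) / (β - 1) := by
  have h1 : IntegrableOn (fun t : ℝ => t ^ (-β)) (Set.Ioi R) :=
    integrableOn_Ioi_rpow_of_lt (by linarith) hR
  have h2 : Integrable ((Set.Ioi R).indicator fun t : ℝ => t ^ (-β)) :=
    (integrable_indicator_iff measurableSet_Ioi).2 h1
  have h3 : Integrable fun v : ℝ => (Set.Ioi R).indicator (fun t : ℝ => t ^ (-β)) |v| := by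
    refine (h2.add h2.comp_neg).congr (Filter.Eventually.of_forall fun v => ?_)
    rcases le_total 0 v with hv | hv
    · have : ¬ R < -v := by linarith
      simp [Set.indicator, abs_of_nonneg hv, this]
    · have : ¬ R < v := by linarith
      simp [Set.indicator, abs_of_nonpos hv, this]
  have hpi : 2 * π ≠ 0 := by positivity
  refine ⟨h3.comp_mul_left' hpi, ?_⟩
  have h4 : ∫ u, tail β R u = |(2 * π)⁻¹| * (2 * (R ^ (-β + 1) / (β - 1))) := by
    unfold tail
    rw [Measure.integral_comp_mul_left
      (fun v => (Set.Ioi R).indicator (fun t : ℝ => t ^ (-β)) |v|), smul_eq_mul,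
      integral_comp_abs (f := (Set.Ioi R).indicator (fun t : ℝ => t ^ (-β))),
      setIntegral_indicator measurableSet_Ioi, Set.Ioi_inter_Ioi, max_eq_right hR.le,
      integral_Ioi_rpow_of_lt (by linarith) hR]
    congr 2
    rw [← neg_div_neg_eq]
    congr 1 <;> ring
  rw [h4, abs_of_pos (by positivity), ← mul_assoc]
  have h5 : 0 ≤ R ^ (-β + 1) / (β - 1) := div_nonneg (rpow_nonneg hR.le _) (by linarith)
  refine mul_le_of_le_one_left h5 ?_
  rw [mul_inv, mul_comm, ← mul_assoc, mul_inv_cancel₀ two_ne_zero, one_mul]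
  exact inv_le_one_of_one_le₀ (by have := pi_gt_three; linarith)

/-- The spectral energy outside the cube is `O (R ^ (-β + 1))`, by a union bound over the coordinate
that leaves the interval `[-R / 2π, R / 2π]`. -/
lemma tail_integral_bound {D : ℕ} {β c : ℝ} (hβ : 1 < β)
    {g : (Fin D → ℝ) → ℂ}
    (hg : ∀ᵐ ξ : Fin D → ℝ, ‖g ξ‖ ≤ c * ∏ j : Fin D, 1 / (1 + |2 * π * ξ j| ^ β))
    {R : ℝ} (hR : 0 < R) :
    ∫⁻ ξ : Fin D → ℝ, (WithLp.toLp 2 ⁻¹' (cube D R)ᶜ).indicator (fun ξ => ‖g ξ‖ₑ ^ 2) ξ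
      ≤ ENNReal.ofReal ((c ^ 2 * D * (∫ u : ℝ, 1 / (1 + |2 * π * u| ^ β)) ^ (D - 1) / (β - 1))
        * R ^ (-β + 1)) := by
  set w : ℝ → ℝ := fun u => 1 / (1 + |2 * π * u| ^ β) with hw
  have hw0 : ∀ u, 0 ≤ w u := fun u => by positivity
  have hw1 : ∀ u, w u ≤ 1 := fun u => by
    have : 0 ≤ |2 * π * u| ^ β := by positivity
    exact (div_le_one (by positivity)).2 (by linarith)
  have hwi : Integrable w := integrable_decay hβ
  obtain ⟨hti, htb⟩ := integral_tail hβ hR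
  -- the majorant when coordinate `j` is the large one: the tail there, the decay factor elsewhere
  set F : Fin D → Fin D → ℝ → ℝ := fun j l => if l = j then tail β R else w with hF
  have hF0 : ∀ j l u, 0 ≤ F j l u := by
    intro j l u
    by_cases h : l = j <;> simp only [hF, h, if_true, if_false]
    · exact tail_nonneg u
    · exact hw0 u
  have hFi : ∀ j l, Integrable (F j l) := by
    intro j l
    by_cases h : l = j <;> simp only [hF, h, if_true, if_false]
    · exact hti
    · exact hwi
  have hprod : ∀ j, Integrable fun ξ : Fin D → ℝ => ∏ l, F j l (ξ l) := fun j =>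
    Integrable.fintype_prod (hFi j)
  have hsum : Integrable fun ξ : Fin D → ℝ => c ^ 2 * ∑ j, ∏ l, F j l (ξ l) :=
    (integrable_finsetSum _ fun j _ => hprod j).const_mul _
  have hnn : ∀ ξ : Fin D → ℝ, ∀ j, 0 ≤ ∏ l, F j l (ξ l) := fun ξ j =>
    Finset.prod_nonneg fun l _ => hF0 j l _
  calc _ ≤ ∫⁻ ξ : Fin D → ℝ, ENNReal.ofReal (c ^ 2 * ∑ j, ∏ l, F j l (ξ l)) := by
        refine lintegral_mono_ae ?_
        filter_upwards [hg] with ξ hξ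
        by_cases hmem : ξ ∈ WithLp.toLp 2 ⁻¹' (cube D R)ᶜ
        swap
        · rw [Set.indicator_of_notMem hmem]; exact zero_le
        rw [Set.indicator_of_mem hmem, ← enorm_pow, ← ofReal_norm, norm_pow]
        refine ENNReal.ofReal_le_ofReal ?_
        have : ∃ j, ξ j ∉ Set.Icc (-(R / (2 * π))) (R / (2 * π)) := by
          simpa [cube, -Set.mem_Icc] using hmem
        obtain ⟨j, hj⟩ := this
        have hRj : R < |2 * π * ξ j| := by
          have h1 : R / (2 * π) < |ξ j| := not_le.1 fun h => hj (abs_le.1 h)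
          rw [div_lt_iff₀' (by positivity)] at h1
          rwa [abs_mul, abs_of_pos (show 0 < 2 * π by positivity)]
        have hj' : w (ξ j) ^ 2 ≤ tail β R (ξ j) := by
          have h1 : w (ξ j) ≤ |2 * π * ξ j| ^ (-β) := by
            rw [hw, rpow_neg (abs_nonneg _), ← one_div]
            have : 0 < |2 * π * ξ j| := hR.trans hRj
            refine one_div_le_one_div_of_le (by positivity) (by linarith)
          rw [tail, Set.indicator_of_mem (show |2 * π * ξ j| ∈ Set.Ioi R from hRj)]
          have := hw0 (ξ j); have := hw1 (ξ j)
          nlinarith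
        calc ‖g ξ‖ ^ 2 ≤ (c * ∏ l, w (ξ l)) ^ 2 := by gcongr
          _ = c ^ 2 * ∏ l, w (ξ l) ^ 2 := by rw [mul_pow, Finset.prod_pow]
          _ ≤ c ^ 2 * ∏ l, F j l (ξ l) := by
              gcongr with l _
              by_cases h : l = j
              · subst h; simpa [hF] using hj'
              · simp only [hF, h, if_false]
                have := hw0 (ξ l); have := hw1 (ξ l)
                nlinarith
          _ ≤ _ := by
              gcongr
              exact Finset.single_le_sum (f := fun j => ∏ l, F j l (ξ l))
                (fun i _ => hnn ξ i) (Finset.mem_univ j)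
    _ = ENNReal.ofReal (∫ ξ : Fin D → ℝ, c ^ 2 * ∑ j, ∏ l, F j l (ξ l)) := by
        rw [ofReal_integral_eq_lintegral_ofReal hsum]
        exact Filter.Eventually.of_forall fun ξ =>
          mul_nonneg (by positivity) (Finset.sum_nonneg fun j _ => hnn ξ j)
    _ ≤ _ := by
        refine ENNReal.ofReal_le_ofReal ?_
        rw [integral_const_mul, integral_finsetSum _ fun j _ => hprod j]
        have hj : ∀ j, ∫ ξ : Fin D → ℝ, ∏ l, F j l (ξ l)
            = (∫ u, tail β R u) * (∫ u, w u) ^ (D - 1) := by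
          intro j
          rw [integral_fintype_prod_volume_eq_prod (f := F j),
            ← Finset.mul_prod_erase _ _ (Finset.mem_univ j)]
          congr 1
          · simp [hF]
          · rw [Finset.prod_congr rfl (g := fun _ => ∫ u, w u), Finset.prod_const,
              Finset.card_erase_of_mem (Finset.mem_univ j), Finset.card_univ, Fintype.card_fin]
            intro l hl
            simp [hF, Finset.ne_of_mem_erase hl]
        simp only [hj, Finset.sum_const, Finset.card_univ, Fintype.card_fin, nsmul_eq_mul]
        have hW : 0 ≤ ∫ u, w u := integral_nonneg hw0
        calc _ ≤ c ^ 2 * (D * (R ^ (-β + 1) / (β - 1) * (∫ u, w u) ^ (D - 1))) := by gcongr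
          _ = _ := by ring

/-! ### Variance -/

lemma continuous_dirichletKernel (D : ℕ) (R : ℝ) : Continuous (dirichletKernel D R) := by
  unfold dirichletKernel
  have := continuous_sinc
  fun_prop

lemma abs_dirichletKernel_le {D : ℕ} {R : ℝ} (hR : 0 < R) (u : Fin D → ℝ) :
    |dirichletKernel D R u| ≤ (R / π) ^ D := by
  rw [dirichletKernel, Finset.abs_prod]
  calc ∏ j, |R / π * sinc (R * u j)| ≤ ∏ _j : Fin D, (R / π) := by
        gcongr with j _
        rw [abs_mul, abs_of_pos (by positivity)]
        exact mul_le_of_le_one_right (by positivity) (abs_sinc_le_one _)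
    _ = _ := by rw [Finset.prod_const, Finset.card_univ, Fintype.card_fin]

lemma sinc_sq_le (x : ℝ) : sinc x ^ 2 ≤ 2 * (1 + x ^ 2)⁻¹ := by
  rw [← div_eq_mul_inv, le_div_iff₀ (by positivity)]
  have h1 : sinc x ^ 2 ≤ 1 := by
    rw [← sq_abs]
    exact pow_le_one₀ (abs_nonneg _) (abs_sinc_le_one x)
  have h2 : (sinc x * x) ^ 2 ≤ 1 := by
    by_cases hx : x = 0
    · simp [hx]
    · rw [sinc_of_ne_zero hx, div_mul_cancel₀ _ hx]
      exact sin_sq_le_one x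
  nlinarith

lemma lintegral_dirichletKernel_sq_le {D : ℕ} {R : ℝ} (hR : 0 < R) :
    ∫⁻ u : Fin D → ℝ, ENNReal.ofReal (dirichletKernel D R u ^ 2) ≤ ENNReal.ofReal (R ^ D) := by
  -- one-dimensional majorant of the squared kernel; its integral is `2 R / π ≤ R`
  set f : ℝ → ℝ := fun v => (R / π) ^ 2 * (2 * (1 + (R * v) ^ 2)⁻¹) with hf
  have hfi : Integrable f :=
    ((integrable_inv_one_add_sq.comp_mul_left' hR.ne').const_mul 2).const_mul _
  have hf0 : ∀ v, 0 ≤ f v := fun v => by positivity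
  have hfint : ∫ v, f v ≤ R := by
    have h1 : ∫ v, f v = (R / π) ^ 2 * (2 * (R⁻¹ * π)) := by
      simp only [hf]
      rw [integral_const_mul, integral_const_mul,
        Measure.integral_comp_mul_left (fun v : ℝ => (1 + v ^ 2)⁻¹), integral_univ_inv_one_add_sq,
        abs_of_pos (by positivity), smul_eq_mul]
    have h2 : (R / π) ^ 2 * (2 * (R⁻¹ * π)) = R * (2 / π) := by field
    rw [h1, h2]
    refine mul_le_of_le_one_right hR.le ((div_le_one pi_pos).2 ?_)
    linarith [pi_gt_three]
  have hprodi : Integrable (fun u : Fin D → ℝ => ∏ j, f (u j)) :=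
    Integrable.fintype_prod fun _ => hfi
  calc _ ≤ ∫⁻ u : Fin D → ℝ, ENNReal.ofReal (∏ j, f (u j)) := by
        refine lintegral_mono fun u => ENNReal.ofReal_le_ofReal ?_
        rw [dirichletKernel, ← Finset.prod_pow]
        gcongr with j _
        rw [mul_pow]
        simp only [hf]
        gcongr
        exact sinc_sq_le _
    _ = ENNReal.ofReal (∫ u : Fin D → ℝ, ∏ j, f (u j)) := by
        rw [ofReal_integral_eq_lintegral_ofReal hprodi]
        exact Filter.Eventually.of_forall fun u => Finset.prod_nonneg fun j _ => hf0 _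
    _ ≤ _ := by
        refine ENNReal.ofReal_le_ofReal ?_
        rw [integral_fintype_prod_volume_eq_pow, Fintype.card_fin]
        exact pow_le_pow_left₀ (integral_nonneg hf0) hfint D

lemma pEst_eq (D N : ℕ) (R : ℝ) (ks : Fin N → Fin D → ℝ) (k : Fin D → ℝ) :
    pEst D N (fun z => z) π R ks k = ∑ i, (1 / N : ℝ) * dirichletKernel D R (k - ks i) := by
  have hs : ∀ z, sincLike z = sinc z := fun z => rfl
  simp only [pEst, dirichletKernel, hs, Finset.prod_mul_distrib, Finset.prod_const,
    Finset.card_univ, Fintype.card_fin, Finset.mul_sum, Pi.sub_apply]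
  refine Finset.sum_congr rfl fun i _ => ?_
  rw [div_pow, ← mul_assoc]
  congr 1
  rw [div_mul_div_comm, one_mul]

open ProbabilityTheory in
/-- Bias-variance bound for the empirical mean of a bounded function `X` over an i.i.d. sample, as an
estimator of the number `a`. -/
lemma pointwise_mse {Ω : Type*} [MeasurableSpace Ω] (ν : Measure Ω) [IsProbabilityMeasure ν]
    {X : Ω → ℝ} (hX : Measurable X) {M : ℝ} (hM : ∀ x, |X x| ≤ M) {N : ℕ} (hN : 1 ≤ N) (a : ℝ) :
    ∫⁻ ks : Fin N → Ω, ENNReal.ofReal ((∑ i, (1 / N : ℝ) * X (ks i) - a) ^ 2)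
        ∂(Measure.pi fun _ : Fin N => ν)
      ≤ ENNReal.ofReal (((∫ x, X x ∂ν) - a) ^ 2)
        + ENNReal.ofReal (1 / N) * ∫⁻ x, ENNReal.ofReal (X x ^ 2) ∂ν := by
  have hN0 : (N : ℝ) ≠ 0 := by positivity
  set μ : Measure (Fin N → Ω) := Measure.pi fun _ : Fin N => ν with hμ
  have hX2 : MemLp X 2 ν := MemLp.of_bound hX.aestronglyMeasurable M
    (Filter.Eventually.of_forall hM)
  set Y : Ω → ℝ := fun x => (1 / N : ℝ) * X x with hY
  have hY2 : MemLp Y 2 ν := hX2.const_mul _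
  set S : (Fin N → Ω) → ℝ := fun ks => ∑ i, Y (ks i) with hS
  have hYi : ∀ i, MemLp (fun ks : Fin N → Ω => Y (ks i)) 2 μ := fun i =>
    hY2.comp_measurePreserving (measurePreserving_eval (fun _ : Fin N => ν) i)
  have hS2 : MemLp S 2 μ := memLp_finsetSum _ fun i _ => hYi i
  have hSint : Integrable S μ := hS2.integrable (by norm_num)
  have hSsq : Integrable (fun ks => S ks ^ 2) μ := hS2.integrable_sq
  have hES : ∫ ks, S ks ∂μ = ∫ x, X x ∂ν := by
    simp only [hS]
    rw [integral_finsetSum _ fun i _ => (hYi i).integrable (by norm_num)]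
    have : ∀ i : Fin N, ∫ ks, Y (ks i) ∂μ = (1 / N : ℝ) * ∫ x, X x ∂ν := fun i => by
      rw [hμ, integral_comp_eval (μ := fun _ : Fin N => ν) (i := i) hY2.aestronglyMeasurable,
        integral_const_mul]
    simp only [this, Finset.sum_const, Finset.card_univ, Fintype.card_fin, nsmul_eq_mul]
    field
  have hVar : Var[S; μ] ≤ (1 / N : ℝ) * ∫ x, X x ^ 2 ∂ν := by
    have h1 : S = ∑ i, fun ks : Fin N → Ω => Y (ks i) := by
      ext ks; simp [hS]
    rw [h1, hμ, variance_sum_pi (μ := fun _ : Fin N => ν) (X := fun _ => Y) fun _ => hY2]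
    simp only [Finset.sum_const, Finset.card_univ, Fintype.card_fin, nsmul_eq_mul, hY]
    rw [variance_const_mul]
    have h2 : Var[X; ν] ≤ ∫ x, X x ^ 2 ∂ν := variance_le_expectation_sq hX.aestronglyMeasurable
    calc (N : ℝ) * ((1 / N : ℝ) ^ 2 * Var[X; ν]) = (1 / N : ℝ) * Var[X; ν] := by field
      _ ≤ _ := by gcongr
  have hexp : ∫ ks, (S ks - a) ^ 2 ∂μ = ((∫ x, X x ∂ν) - a) ^ 2 + Var[S; μ] := by
    rw [variance_eq_sub hS2, ← hES]
    have : ∀ ks, (S ks - a) ^ 2 = S ks ^ 2 - 2 * a * S ks + a ^ 2 := fun ks => by ring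
    simp only [this]
    have i1 : Integrable (fun ks => S ks ^ 2 - 2 * a * S ks) μ := hSsq.sub (hSint.const_mul _)
    rw [integral_add i1 (integrable_const _), integral_sub hSsq (hSint.const_mul _), integral_const_mul]
    simp
    ring
  have h_integrable : Integrable (fun ks => (S ks - a) ^ 2) μ :=
    (hS2.sub (memLp_const a)).integrable_sq
  rw [← ofReal_integral_eq_lintegral_ofReal h_integrable
      (Filter.Eventually.of_forall fun _ => sq_nonneg _),
    ← ofReal_integral_eq_lintegral_ofReal hX2.integrable_sq
      (Filter.Eventually.of_forall fun _ => sq_nonneg _),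
    ← ENNReal.ofReal_mul (by positivity), ← ENNReal.ofReal_add (by positivity)
      (mul_nonneg (by positivity) (integral_nonneg fun _ => sq_nonneg _)), hexp]
  exact ENNReal.ofReal_le_ofReal (by gcongr)

/-- No integrability is needed: the Bochner integral of a non-integrable function is `0`. This is why
the integrability of the integrands in `MISE` never has to be established. -/
lemma ofReal_integral_le_lintegral {α : Type*} [MeasurableSpace α] (μ : Measure α) {f : α → ℝ}
    (hf : ∀ x, 0 ≤ f x) : ENNReal.ofReal (∫ x, f x ∂μ) ≤ ∫⁻ x, ENNReal.ofReal (f x) ∂μ := by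
  have h := enorm_integral_le_lintegral_enorm (μ := μ) f
  rw [Real.enorm_of_nonneg (integral_nonneg hf)] at h
  exact h.trans_eq (lintegral_congr fun x => Real.enorm_of_nonneg (hf x))

/-- The mean integrated squared error is at most the integrated squared bias plus `R ^ D / N`. -/
lemma mise_lintegral_bound {D N : ℕ} (hN : 1 ≤ N) {p : (Fin D → ℝ) → ℝ}
    (hp_meas : Measurable p) (hp_nonneg : ∀ x, 0 ≤ p x) (hp_int : Integrable p)
    (hp_one : ∫ x : Fin D → ℝ, p x = 1) {R : ℝ} (hR : 0 < R) :
    ENNReal.ofReal (MISE D N (fun z => z) π R p) ≤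
      (∫⁻ k : Fin D → ℝ, ENNReal.ofReal (((∫ x, dirichletKernel D R (k - x) * p x) - p k) ^ 2))
        + ENNReal.ofReal (R ^ D / N) := by
  set ν : Measure (Fin D → ℝ) := volume.withDensity fun x => ENNReal.ofReal (p x) with hν
  have hprob : IsProbabilityMeasure ν := ⟨by
    rw [hν, withDensity_apply _ MeasurableSet.univ, Measure.restrict_univ,
      ← ofReal_integral_eq_lintegral_ofReal hp_int (Filter.Eventually.of_forall hp_nonneg),
      hp_one, ENNReal.ofReal_one]⟩
  have hKm : Measurable (dirichletKernel D R) := (continuous_dirichletKernel D R).measurable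
  have hEK : ∀ k : Fin D → ℝ, ∫ x, dirichletKernel D R (k - x) ∂ν
      = ∫ x, dirichletKernel D R (k - x) * p x := by
    intro k
    rw [hν, integral_withDensity_eq_integral_toReal_smul hp_meas.ennreal_ofReal
      (Filter.Eventually.of_forall fun _ => ENNReal.ofReal_lt_top)]
    congr 1
    ext x
    rw [ENNReal.toReal_ofReal (hp_nonneg x), smul_eq_mul, mul_comm]
  have hbias_meas : Measurable fun k : Fin D → ℝ =>
      ENNReal.ofReal (((∫ x, dirichletKernel D R (k - x) ∂ν) - p k) ^ 2) := by
    have h : Measurable fun k : Fin D → ℝ => ∫ x, dirichletKernel D R (k - x) ∂ν := by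
      have hu : StronglyMeasurable (Function.uncurry fun k x : Fin D → ℝ =>
          dirichletKernel D R (k - x)) :=
        (hKm.comp (measurable_fst.sub measurable_snd)).stronglyMeasurable
      exact hu.integral_prod_right.measurable
    exact ((h.sub hp_meas).pow_const 2).ennreal_ofReal
  have hsq_meas : Measurable (Function.uncurry fun k x : Fin D → ℝ =>
      ENNReal.ofReal (dirichletKernel D R (k - x) ^ 2)) :=
    ((hKm.comp (measurable_fst.sub measurable_snd)).pow_const 2).ennreal_ofReal
  calc ENNReal.ofReal (MISE D N (fun z => z) π R p)
      ≤ ∫⁻ ks : Fin N → Fin D → ℝ, ENNReal.ofReal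
          (∫ k : Fin D → ℝ, (pEst D N (fun z => z) π R ks k - p k) ^ 2)
          ∂(Measure.pi fun _ : Fin N => ν) :=
        ofReal_integral_le_lintegral _ fun ks => integral_nonneg fun k => sq_nonneg _
    _ ≤ ∫⁻ ks : Fin N → Fin D → ℝ, (∫⁻ k : Fin D → ℝ, ENNReal.ofReal
          ((pEst D N (fun z => z) π R ks k - p k) ^ 2))
          ∂(Measure.pi fun _ : Fin N => ν) :=
        lintegral_mono fun ks => ofReal_integral_le_lintegral _ fun k => sq_nonneg _
    _ = ∫⁻ k : Fin D → ℝ, ∫⁻ ks : Fin N → Fin D → ℝ, ENNReal.ofReal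
          ((pEst D N (fun z => z) π R ks k - p k) ^ 2)
          ∂(Measure.pi fun _ : Fin N => ν) := by
        refine lintegral_lintegral_swap (Measurable.aemeasurable ?_)
        simp only [pEst_eq]
        simp only [Function.uncurry_def]
        fun_prop
    _ ≤ ∫⁻ k : Fin D → ℝ, (ENNReal.ofReal (((∫ x, dirichletKernel D R (k - x) ∂ν) - p k) ^ 2)
        + ENNReal.ofReal (1 / N) * ∫⁻ x, ENNReal.ofReal (dirichletKernel D R (k - x) ^ 2) ∂ν) := by
        refine lintegral_mono fun k => ?_
        simp only [pEst_eq]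
        exact pointwise_mse ν (X := fun x => dirichletKernel D R (k - x))
          (hKm.comp (measurable_const.sub measurable_id))
          (fun x => abs_dirichletKernel_le hR _) hN (p k)
    _ = (∫⁻ k : Fin D → ℝ, ENNReal.ofReal (((∫ x, dirichletKernel D R (k - x) ∂ν) - p k) ^ 2))
        + ENNReal.ofReal (1 / N) *
          ∫⁻ x, (∫⁻ k : Fin D → ℝ, ENNReal.ofReal (dirichletKernel D R (k - x) ^ 2)) ∂ν := by
        rw [lintegral_add_left hbias_meas, lintegral_const_mul' _ _ ENNReal.ofReal_ne_top,
          lintegral_lintegral_swap hsq_meas.aemeasurable]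
    _ ≤ _ := by
        simp only [hEK]
        gcongr
        calc _ ≤ ENNReal.ofReal (1 / N) * ∫⁻ _x, ENNReal.ofReal (R ^ D) ∂ν := by
              gcongr with x
              rw [lintegral_sub_right_eq_self
                (fun u : Fin D → ℝ => ENNReal.ofReal (dirichletKernel D R u ^ 2)) x]
              exact lintegral_dirichletKernel_sq_le hR
          _ = _ := by
              rw [lintegral_const, measure_univ, mul_one, ← ENNReal.ofReal_mul (by positivity)]
              congr 1
              ring

/-! ### The bound -/

/-- MISE bound for the classical Fourier integral estimator (`φ(z) = z`,
`A = π`) when the density is ordinary smooth of order `β > 1`. -/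
theorem mise_bound_fourier_ordinary_smooth
    (D : ℕ) (hD : 0 < D)
    (p : (Fin D → ℝ) → ℝ)
    (hp_meas : Measurable p) (hp_nonneg : ∀ x, 0 ≤ p x)
    (hp_int : Integrable p) (hp_sq : Integrable (fun x => p x ^ 2))
    (hp_one : ∫ x : Fin D → ℝ, p x = 1)
    (β c : ℝ) (hβ : 1 < β) (hc : 0 < c)
    (hordinary : ∀ᵐ x : Fin D → ℝ,
      ‖charFun D p x‖ ≤ c * ∏ j : Fin D, 1 / (1 + |x j| ^ β)) :
    ∃ cbar : ℝ, 0 < cbar ∧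
      ∀ R : ℝ, 0 < R → ∀ N : ℕ, 1 ≤ N →
        MISE D N (fun z => z) Real.pi R p
          ≤ cbar * (R ^ (-β + 1) + R ^ D / N) := by
  set C : ℝ := c ^ 2 * D * (∫ u : ℝ, 1 / (1 + |2 * π * u| ^ β)) ^ (D - 1) / (β - 1) with hC
  have hC0 : 0 ≤ C := by
    have h1 : 0 ≤ ∫ u : ℝ, 1 / (1 + |2 * π * u| ^ β) := integral_nonneg fun u => by positivity
    exact div_nonneg (by positivity) (by linarith)
  refine ⟨C + 1, by linarith, fun R hR N hN => ?_⟩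
  have hB := tail_integral_bound hβ (ae_fourier_bound hordinary) hR
  have h := mise_lintegral_bound hN hp_meas hp_nonneg hp_int hp_one hR
  rw [bias_eq hR hp_meas hp_int hp_sq] at h
  have hRβ : 0 ≤ R ^ (-β + 1) := rpow_nonneg hR.le _
  have hRN : 0 ≤ R ^ D / N := by positivity
  have h2 := h.trans (add_le_add_left hB _)
  rw [← ENNReal.ofReal_add (mul_nonneg hC0 hRβ) hRN] at h2
  have h3 := (ENNReal.ofReal_le_ofReal_iff (add_nonneg (mul_nonneg hC0 hRβ) hRN)).1 h2
  nlinarith [mul_nonneg hC0 hRN]
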